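/- For every n ≥ 2 and every cost matrix c : Fin n → Fin n → ℝ≥0∞, the quantity ⨅_{k : Fin n} (hk Finset.univ k + c k 0) equals the infimum, over all bijections p : Fin n → Fin n with p 0 = 0, of the Hamiltonian tour cost ∑_{i=0}^{n-2} c (p i) (p (i+1)) + c (p (n-1)) (p 0). In particular, the value returned by the dynamic program is the minimum cost of a traveling-salesman tour. -/

import Mathlib

/-!
The table entry `hk c S k` is the least cost of a path that starts at `0`, visits every vertex of
`S` exactly once and ends at `k`. Such a path with `m` edges is encoded by a sequence
`q : ℕ → Fin n`, injective on `{0, …, m}`, of which only the first `m + 1` values matter. This makes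
removing the last vertex of a path, which is what the recursion for `hk` does, a matter of replacing
`m + 1` by `m`.

Both halves of the claim about `hk` go by induction on `m`: `hk_image_le` says that `hk` is at most
the cost of every path, and `le_hk_add` that it is at least any common lower bound of these costs.
For `S = univ` the paths are exactly the bijections fixing `0`, and adding the closing edge gives
the theorem.
-/

open scoped ENNReal

/-- The Held–Karp dynamic-programming table. -/
noncomputable def hk {n : ℕ} [NeZero n] (c : Fin n → Fin n → ℝ≥0∞) :
    Finset (Fin n) → Fin n → ℝ≥0∞
  | S, k =>
    if S = {0} ∧ k = 0 then 0
    else if h : 0 ∈ S ∧ k ∈ S ∧ k ≠ 0 ∧ 2 ≤ S.card then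
      ⨅ j ∈ S \ {k}, (hk c (S.erase k) j + c j k)
    else ⊤
  termination_by S _ => S.card
  decreasing_by exact Finset.card_erase_lt_of_mem h.2.1

/-- `q 0, …, q m` is a path without repetitions that starts at `0`, has vertex set `S` and ends at
`k`. The values of `q` beyond `m` are irrelevant. -/
def IsPath {n : ℕ} [NeZero n] (m : ℕ) (q : ℕ → Fin n) (S : Finset (Fin n)) (k : Fin n) : Prop :=
  Set.InjOn q (Finset.range (m + 1)) ∧ q 0 = 0 ∧ (Finset.range (m + 1)).image q = S ∧ q m = k

theorem hk_zero {n : ℕ} [NeZero n] (c : Fin n → Fin n → ℝ≥0∞) : hk c {0} 0 = 0 := by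
  rw [hk]; simp

theorem hk_step {n : ℕ} [NeZero n] (c : Fin n → Fin n → ℝ≥0∞) {S : Finset (Fin n)} {k : Fin n}
    (h : 0 ∈ S ∧ k ∈ S ∧ k ≠ 0 ∧ 2 ≤ S.card) :
    hk c S k = ⨅ j ∈ S \ {k}, (hk c (S.erase k) j + c j k) := by
  rw [hk, if_neg (fun h' => h.2.2.1 h'.2), dif_pos h]

theorem hk_top {n : ℕ} [NeZero n] (c : Fin n → Fin n → ℝ≥0∞) {S : Finset (Fin n)} {k : Fin n}
    (h₀ : ¬ (S = {0} ∧ k = 0)) (h : ¬ (0 ∈ S ∧ k ∈ S ∧ k ≠ 0 ∧ 2 ≤ S.card)) :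
    hk c S k = ⊤ := by
  rw [hk, if_neg h₀, dif_neg h]

theorem hk_image_le {n : ℕ} [NeZero n] (c : Fin n → Fin n → ℝ≥0∞) (m : ℕ) (q : ℕ → Fin n)
    (S : Finset (Fin n)) (k : Fin n) (hq : IsPath m q S k) :
    hk c S k ≤ ∑ i ∈ Finset.range m, c (q i) (q (i + 1)) := by
  induction m generalizing S k with
  | zero =>
    obtain ⟨-, h0, rfl, rfl⟩ := hq
    simp [h0, hk_zero]
  | succ m ih =>
    obtain ⟨hinj, h0, rfl, rfl⟩ := hq
    have hnot : q (m + 1) ∉ (Finset.range (m + 1)).image q := by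
      intro hmem
      obtain ⟨i, hi, he⟩ := Finset.mem_image.1 hmem
      rw [Finset.mem_range] at hi
      have := hinj (by simp; omega) (by simp) he
      omega
    have hS : (Finset.range (m + 1 + 1)).image q
        = insert (q (m + 1)) ((Finset.range (m + 1)).image q) := by
      rw [Finset.range_add_one, Finset.image_insert]
    have hcard : ((Finset.range (m + 1 + 1)).image q).card = m + 1 + 1 := by
      rw [Finset.card_image_of_injOn hinj, Finset.card_range]
    have h0mem : (0 : Fin n) ∈ (Finset.range (m + 1)).image q :=
      Finset.mem_image.2 ⟨0, by simp, h0⟩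
    have hcond : 0 ∈ (Finset.range (m + 1 + 1)).image q ∧
        q (m + 1) ∈ (Finset.range (m + 1 + 1)).image q ∧ q (m + 1) ≠ 0 ∧
        2 ≤ ((Finset.range (m + 1 + 1)).image q).card :=
      ⟨by rw [hS]; exact Finset.mem_insert_of_mem h0mem,
        by rw [hS]; exact Finset.mem_insert_self _ _,
        fun h => hnot (by rw [h]; exact h0mem), by omega⟩
    rw [hk_step c hcond, hS, Finset.erase_insert hnot, Finset.sum_range_succ]
    have hmem : q m ∈ (Finset.range (m + 1)).image q := Finset.mem_image.2 ⟨m, by simp, rfl⟩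
    refine (iInf₂_le (q m) ?_).trans (add_le_add_left (ih _ _ ⟨?_, h0, rfl, rfl⟩) _)
    · rw [Finset.mem_sdiff, Finset.mem_singleton]
      exact ⟨Finset.mem_insert_of_mem hmem, fun h => hnot (h ▸ hmem)⟩
    · exact hinj.mono (by intro i; simp; omega)

/-- Every common lower bound of the path costs is a lower bound of `hk`. The summand `d` stands for
the cost of the part of the tour after `k`; letting it vary is what makes the induction work, since
the last edge of a path is absorbed into it. -/
theorem le_hk_add {n : ℕ} [NeZero n] (c : Fin n → Fin n → ℝ≥0∞) (m : ℕ)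
    (S : Finset (Fin n)) (k : Fin n) (hS : S.card = m + 1) (b d : ℝ≥0∞)
    (hb : ∀ q, IsPath m q S k → b ≤ (∑ i ∈ Finset.range m, c (q i) (q (i + 1))) + d) :
    b ≤ hk c S k + d := by
  induction m generalizing S k d with
  | zero =>
    by_cases h₀ : S = {0} ∧ k = 0
    · obtain ⟨rfl, rfl⟩ := h₀
      simpa [hk_zero] using hb (fun _ => 0) ⟨by simp, rfl, by simp, rfl⟩
    · rw [hk_top c h₀ (by omega), top_add]
      exact le_top
  | succ m ih =>
    by_cases h : 0 ∈ S ∧ k ∈ S ∧ k ≠ 0 ∧ 2 ≤ S.card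
    · rw [hk_step c h]
      simp only [ENNReal.iInf_add]
      refine le_iInf₂ fun j hj => ?_
      rw [add_assoc]
      refine ih _ _ (by rw [Finset.card_erase_of_mem h.2.1]; omega) _ fun q hq => ?_
      obtain ⟨hinj, h0, him, hqm⟩ := hq
      -- Extend the path by the vertex `k`.
      have hlt : ∀ i, i < m + 1 → Function.update q (m + 1) k i = q i := fun i hi =>
        Function.update_of_ne (by omega) _ _
      have hEq : Set.EqOn (Function.update q (m + 1) k) q (Finset.range (m + 1)) := fun i hi =>
        hlt i (by simpa using hi)
      have himg : (Finset.range (m + 1)).image (Function.update q (m + 1) k) = S.erase k := by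
        rw [Finset.image_congr hEq, him]
      have hpath : IsPath (m + 1) (Function.update q (m + 1) k) S k := by
        refine ⟨?_, by rw [hlt 0 (by omega), h0], ?_, by simp⟩
        · rw [Finset.range_add_one, Finset.coe_insert, Set.injOn_insert (by simp)]
          refine ⟨hinj.congr hEq.symm, ?_⟩
          rw [← Finset.coe_image, himg]
          simp
        · rw [Finset.range_add_one, Finset.image_insert, himg, Function.update_self,
            Finset.insert_erase h.2.1]
      refine (hb _ hpath).trans_eq ?_
      rw [Finset.sum_range_succ, Function.update_self, hlt m (by omega), hqm, add_assoc]
      congr 1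
      refine Finset.sum_congr rfl fun i hi => ?_
      rw [Finset.mem_range] at hi
      rw [hlt i (by omega), hlt (i + 1) (by omega)]
    · rw [hk_top c (fun h' => by simp [h'.1] at hS) h, top_add]
      exact le_top

/-- The value `⨅ k, (hk c univ k + c k 0)` returned by the dynamic program equals the minimum
cost of a traveling-salesman tour, the infimum over all bijections `p : Fin n → Fin n` with
`p 0 = 0` of `∑_{i=0}^{n-2} c (p i) (p (i+1)) + c (p (n-1)) (p 0)`. -/
theorem heldKarp_eq_min_tsp_tour {n : ℕ} [NeZero n] (hn : 2 ≤ n)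
    (c : Fin n → Fin n → ℝ≥0∞) :
    (⨅ k : Fin n, hk c Finset.univ k + c k 0) =
      ⨅ (p : Fin n → Fin n) (_ : Function.Bijective p ∧ p 0 = 0),
        (∑ i : Fin (n - 1),
            c (p ⟨i.1, lt_of_lt_of_le i.isLt (Nat.sub_le _ _)⟩)
              (p ⟨i.1 + 1, Nat.add_lt_of_lt_sub i.isLt⟩)) +
          c (p ⟨n - 1, Nat.sub_lt (Nat.lt_of_lt_of_le two_pos hn) one_pos⟩) (p 0) := by
  apply le_antisymm
  · refine le_iInf₂ fun p hp => ?_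
    -- Read the tour as a sequence on `ℕ`, with a dummy value beyond `n - 1`.
    let q : ℕ → Fin n := fun i => if h : i < n then p ⟨i, h⟩ else 0
    have hq : ∀ i (h : i < n), q i = p ⟨i, h⟩ := fun i h => dif_pos h
    have hpath : IsPath (n - 1) q Finset.univ (p ⟨n - 1, by omega⟩) := by
      refine ⟨?_, ?_, ?_, hq _ _⟩
      · intro i hi j hj hij
        simp only [Finset.coe_range, Set.mem_Iio] at hi hj
        rw [hq i (by omega), hq j (by omega)] at hij
        simpa using hp.1.1 hij
      · rw [hq 0 (by omega)]
        exact hp.2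
      · refine Finset.eq_univ_of_forall fun x => ?_
        obtain ⟨i, rfl⟩ := hp.1.2 x
        exact Finset.mem_image.2 ⟨i, by simp; omega, hq i i.2⟩
    refine (iInf_le _ (p ⟨n - 1, by omega⟩)).trans ?_
    rw [hp.2]
    refine add_le_add_left ((hk_image_le c _ _ _ _ hpath).trans_eq ?_) _
    rw [Finset.sum_range]
    refine Finset.sum_congr rfl fun i _ => ?_
    rw [hq i (by omega), hq (i + 1) (by omega)]
  · refine le_iInf fun k => ?_
    refine le_hk_add c (n - 1) _ k (by simp; omega) _ _ fun q hq => ?_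
    obtain ⟨hinj, h0, -, hk⟩ := hq
    have hp0 : q (0 : Fin n).1 = 0 := by simpa using h0
    have hp : Function.Injective fun i : Fin n => q i := fun i j hij =>
      Fin.ext (hinj (by simp; omega) (by simp; omega) hij)
    refine (iInf₂_le (fun i : Fin n => q i) ⟨Finite.injective_iff_bijective.1 hp, hp0⟩).trans_eq ?_
    beta_reduce
    rw [Finset.sum_range, hp0, hk]
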